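/- Suppose Assumptions A1 and A2 hold, let β > 0, and let t ↦ (x(t), y(t)), t ≥ 0, be a continuously differentiable solution of the prediction-correction dynamics with arbitrary initialization (x(0), y(0)). Let x* be a global minimizer of ℓ. Then for every t > 0, (1/(2t)) ∫₀ᵗ ‖∇ℓ(x(τ))‖² dτ ≤ (1/t) ( ℓ(x(0)) − ℓ(x*) + (M₁² / (4 β μ_g²)) ‖∇_y g(x(0), y(0))‖² ). -/

import Mathlib

open Set MeasureTheory
open scoped NNReal RealInnerProductSpace

noncomputable section

/-- `Vec k` is the Euclidean space `ℝ^k`. -/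
abbrev Vec (k : ℕ) : Type := EuclideanSpace ℝ (Fin k)

/-- Partial gradient of `f(x, y)` with respect to `x`. -/
noncomputable def gradx {n m : ℕ} (f : Vec n → Vec m → ℝ) (x : Vec n) (y : Vec m) : Vec n :=
  gradient (fun x' => f x' y) x

/-- Partial gradient of `f(x, y)` with respect to `y`. -/
noncomputable def grady {n m : ℕ} (f : Vec n → Vec m → ℝ) (x : Vec n) (y : Vec m) : Vec m :=
  gradient (fun y' => f x y') y

/-- The surrogate map `F(x,y) = ∇ₓ f(x,y) − (∇²_{yx} g(x,y))ᵀ v(x,y)`. -/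
noncomputable def Fsur {n m : ℕ} (f : Vec n → Vec m → ℝ)
    (Gyx : Vec n → Vec m → Vec n →L[ℝ] Vec m) (v : Vec n → Vec m → Vec m)
    (x : Vec n) (y : Vec m) : Vec n :=
  gradx f x y - ContinuousLinearMap.adjoint (Gyx x y) (v x y)

theorem aux_differentiable_y {n m : ℕ} (g : Vec n → Vec m → ℝ) {k : WithTop ℕ∞} (hk : k ≠ 0)
    (hg : ContDiff ℝ k (Function.uncurry g)) (x : Vec n) : Differentiable ℝ (g x) := by
  have : ContDiff ℝ k (fun y => Function.uncurry g (x, y)) :=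
    hg.comp (contDiff_const.prodMk contDiff_id)
  exact this.differentiable hk

theorem aux_grady_inner {n m : ℕ} (g : Vec n → Vec m → ℝ) (x : Vec n) (y u : Vec m) :
    ⟪grady g x y, u⟫ = fderiv ℝ (g x) y u := by
  simp [grady, gradient]

theorem aux_grady_contDiff {n m : ℕ} (g : Vec n → Vec m → ℝ)
    (hg : ContDiff ℝ 2 (Function.uncurry g)) :
    ContDiff ℝ 1 (fun p : Vec n × Vec m => grady g p.1 p.2) := by
  have h1 : ContDiff ℝ 1 (fderiv ℝ (Function.uncurry g)) :=
    hg.fderiv_right (by norm_num)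
  have h2 : (fun p : Vec n × Vec m => grady g p.1 p.2) = fun p =>
      (InnerProductSpace.toDual ℝ (Vec m)).symm
        ((fderiv ℝ (Function.uncurry g) p).comp (ContinuousLinearMap.inr ℝ (Vec n) (Vec m))) := by
    funext p
    obtain ⟨x, y⟩ := p
    have hd : HasFDerivAt (Function.uncurry g) (fderiv ℝ (Function.uncurry g) (x, y)) (x, y) :=
      (hg.differentiable (by norm_num) _).hasFDerivAt
    have h3 : HasFDerivAt (g x) ((fderiv ℝ (Function.uncurry g) (x, y)).comp
        (ContinuousLinearMap.inr ℝ (Vec n) (Vec m))) y :=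
      HasFDerivAt.comp (g := Function.uncurry g) (f := fun y => (x, y)) y hd
        (hasFDerivAt_prodMk_right x y)
    simp only [grady, gradient]
    rw [show (fun y' => g x y') = g x from rfl, h3.fderiv]
  rw [h2]
  exact (InnerProductSpace.toDual ℝ (Vec m)).symm.toContinuousLinearEquiv.contDiff.comp
    (h1.clm_comp contDiff_const)

theorem aux_mono {n m : ℕ} (g : Vec n → Vec m → ℝ)
    (hg : ContDiff ℝ 2 (Function.uncurry g)) (μg : ℝ)
    (hsc : ∀ x, StrongConvexOn Set.univ μg (g x)) (x : Vec n) (a b : Vec m) :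
    μg * ‖b - a‖ ^ 2 ≤ ⟪grady g x b - grady g x a, b - a⟫ := by
  have hd := aux_differentiable_y g (by norm_num) hg x
  have hc := strongConvexOn_iff_convex.1 (hsc x)
  set u := b - a with hu
  set φ : ℝ → ℝ := fun t => g x (a + t • u) - μg / 2 * ‖a + t • u‖ ^ 2 with hφ
  have hφc : ConvexOn ℝ Set.univ φ := by
    have := hc.comp_affineMap (AffineMap.lineMap a b : ℝ →ᵃ[ℝ] Vec m)
    have he : φ = (fun z => g x z - μg / 2 * ‖z‖ ^ 2) ∘ (AffineMap.lineMap a b : ℝ →ᵃ[ℝ] Vec m) := by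
      funext t
      simp [φ, AffineMap.lineMap_apply, add_comm, hu]
    rw [he]
    exact this
  have hl : ∀ t : ℝ, HasDerivAt (fun t : ℝ => a + t • u) u t := fun t => by
    simpa using ((hasDerivAt_id t).smul_const u).const_add a
  have hφd : ∀ t : ℝ, HasDerivAt φ (⟪grady g x (a + t • u), u⟫ - μg * ⟪a + t • u, u⟫) t := by
    intro t
    have h1 := (hd (a + t • u)).hasFDerivAt.comp_hasDerivAt t (hl t)
    have h2 := (hl t).norm_sq
    have h3 := h1.sub (h2.const_mul (μg / 2))
    rw [aux_grady_inner]
    refine h3.congr_deriv ?_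
    ring
  have h1 := hφc.le_slope_of_hasDerivAt (mem_univ 0) (mem_univ 1) zero_lt_one (hφd 0)
  have h2 := hφc.slope_le_of_hasDerivAt (mem_univ 0) (mem_univ 1) zero_lt_one (hφd 1)
  have h3 := h1.trans h2
  have hb : a + u = b := by simp [hu]
  simp only [zero_smul, add_zero, one_smul, hb] at h3
  rw [inner_sub_left, ← real_inner_self_eq_norm_sq]
  have : ⟪u, u⟫ = ⟪b, u⟫ - ⟪a, u⟫ := by rw [← inner_sub_left]
  rw [this]
  linarith

theorem aux_lower {n m : ℕ} (g : Vec n → Vec m → ℝ)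
    (hg : ContDiff ℝ 2 (Function.uncurry g)) (μg : ℝ)
    (hsc : ∀ x, StrongConvexOn Set.univ μg (g x)) (x : Vec n) (a b : Vec m) :
    μg * ‖b - a‖ ≤ ‖grady g x b - grady g x a‖ := by
  have h := (aux_mono g hg μg hsc x a b).trans (real_inner_le_norm _ _)
  rcases (norm_nonneg (b - a)).eq_or_lt with h0 | h0
  · rw [← h0]; simp
  · refine le_of_mul_le_mul_right ?_ h0
    linarith [sq (‖b - a‖)]

theorem aux_hess {n m : ℕ} (g : Vec n → Vec m → ℝ)
    (hg : ContDiff ℝ 2 (Function.uncurry g)) (μg : ℝ)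
    (hsc : ∀ x, StrongConvexOn Set.univ μg (g x)) (x : Vec n) (y : Vec m)
    (A : Vec m →L[ℝ] Vec m) (hA : HasFDerivAt (fun y' => grady g x y') A y) (u : Vec m) :
    μg * ‖u‖ ≤ ‖A u‖ := by
  have hl : HasDerivAt (fun t : ℝ => y + t • u) u 0 := by
    simpa using ((hasDerivAt_id (0:ℝ)).smul_const u).const_add y
  have hA' : HasFDerivAt (fun y' => grady g x y') A (y + (0:ℝ) • u) := by simpa using hA
  have h1 := hA'.comp_hasDerivAt (0:ℝ) hl
  have h2 := (hasDerivAt_iff_tendsto_slope_zero.1 h1).norm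
  refine ge_of_tendsto h2 ?_
  filter_upwards [self_mem_nhdsWithin] with t ht
  have ht' : 0 < |t| := abs_pos.2 ht
  have h3 := aux_lower g hg μg hsc x y (y + t • u)
  simp only [add_sub_cancel_left, norm_smul, Real.norm_eq_abs] at h3
  simp only [Function.comp, zero_add, zero_smul, add_zero, norm_smul, norm_inv, Real.norm_eq_abs]
  rw [inv_mul_eq_div, le_div_iff₀ ht']
  linarith

theorem aux_grady_star {n m : ℕ} (g : Vec n → Vec m → ℝ) (ystar : Vec n → Vec m)
    (hystar : ∀ x', IsMinOn (g x') Set.univ (ystar x')) (x : Vec n) :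
    grady g x (ystar x) = 0 := by
  have h := ((hystar x).isLocalMin Filter.univ_mem).fderiv_eq_zero
  have h' : fderiv ℝ (fun y' => g x y') (ystar x) = 0 := h
  simp [grady, gradient, h']

theorem aux_G_deriv {n m : ℕ} (g : Vec n → Vec m → ℝ)
    (hg : ContDiff ℝ 2 (Function.uncurry g)) (x : Vec n) (y : Vec m)
    (B : Vec n →L[ℝ] Vec m) (A : Vec m →L[ℝ] Vec m)
    (hB : HasFDerivAt (fun x' => grady g x' y) B x)
    (hA : HasFDerivAt (fun y' => grady g x y') A y) :
    HasFDerivAt (fun p : Vec n × Vec m => grady g p.1 p.2) (B.coprod A) (x, y) := by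
  have hd := ((aux_grady_contDiff g hg).differentiable (by norm_num) (x, y)).hasFDerivAt
  have h1 := hB.unique (HasFDerivAt.comp (f := fun x' => (x', y)) x hd
    (hasFDerivAt_prodMk_left x y))
  have h2 := hA.unique (HasFDerivAt.comp (f := fun y' => (x, y')) y hd
    (hasFDerivAt_prodMk_right x y))
  have h3 : B.coprod A = fderiv ℝ (fun p : Vec n × Vec m => grady g p.1 p.2) (x, y) := by
    rw [h1, h2]
    ext p <;> simp
  rw [h3]
  exact hd

theorem aux_ystar_diff {n m : ℕ} (g : Vec n → Vec m → ℝ)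
    (hg : ContDiff ℝ 2 (Function.uncurry g)) (μg : ℝ) (hμg : 0 < μg)
    (hsc : ∀ x, StrongConvexOn Set.univ μg (g x))
    (Lyxg : ℝ≥0) (hgyLx : ∀ y, LipschitzWith Lyxg fun x => grady g x y)
    (ystar : Vec n → Vec m) (hystar : ∀ x', IsMinOn (g x') Set.univ (ystar x'))
    (x : Vec n) (B : Vec n →L[ℝ] Vec m) (A : Vec m →L[ℝ] Vec m)
    (hB : HasFDerivAt (fun x' => grady g x' (ystar x)) B x)
    (hA : HasFDerivAt (fun y' => grady g x y') A (ystar x)) :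
    DifferentiableAt ℝ ystar x := by
  have hst := aux_grady_star g ystar hystar
  have hlow := aux_hess g hg μg hsc x (ystar x) A hA
  have hinj : Function.Injective (A : Vec m →ₗ[ℝ] Vec m) := by
    rw [← LinearMap.ker_eq_bot, LinearMap.ker_eq_bot']
    intro u hu
    have h := hlow u
    have hu' : A u = 0 := hu
    rw [hu', norm_zero] at h
    have : ‖u‖ ≤ 0 := by
      by_contra hc
      push Not at hc
      have := mul_pos hμg hc
      linarith
    exact norm_le_zero_iff.1 this
  let e := (LinearEquiv.ofInjectiveEndo (A : Vec m →ₗ[ℝ] Vec m) hinj).toContinuousLinearEquiv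
  have he : ∀ u, A (e.symm u) = u := fun u => e.apply_symm_apply u
  have hlip : ∀ x', ‖ystar x' - ystar x‖ ≤ (Lyxg / μg) * ‖x' - x‖ := by
    intro x'
    have h1 := aux_lower g hg μg hsc x' (ystar x) (ystar x')
    have h2 := (hgyLx (ystar x)).dist_le_mul x x'
    simp only [dist_eq_norm] at h2
    rw [hst x] at h2
    rw [hst x'] at h1
    rw [norm_sub_rev x x'] at h2
    rw [div_mul_eq_mul_div, le_div_iff₀ hμg]
    linarith
  have hG := aux_G_deriv g hg x (ystar x) B A hB hA
  have hO : (fun x' => ((x', ystar x') : Vec n × Vec m) - (x, ystar x)) =O[nhds x]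
      fun x' => x' - x := by
    have : (fun x' => ystar x' - ystar x) =O[nhds x] fun x' => x' - x :=
      Asymptotics.IsBigO.of_bound _ (Filter.Eventually.of_forall hlip)
    exact (Asymptotics.isBigO_refl _ _).prod_left this
  have hcont : ContinuousAt ystar x := by
    rw [ContinuousAt, tendsto_iff_norm_sub_tendsto_zero]
    refine squeeze_zero (fun _ => norm_nonneg _) hlip ?_
    have : Continuous fun x' : Vec n => (Lyxg / μg : ℝ) * ‖x' - x‖ := by fun_prop
    simpa using this.tendsto x
  have ht : Filter.Tendsto (fun x' => ((x', ystar x') : Vec n × Vec m)) (nhds x)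
      (nhds (x, ystar x)) := (continuousAt_id.prodMk hcont)
  have ho := ((hasFDerivAt_iff_isLittleO.1 hG).comp_tendsto ht).trans_isBigO hO
  have ho2 : (fun x' => B (x' - x) + A (ystar x' - ystar x)) =o[nhds x] fun x' => x' - x := by
    refine ho.neg_left.congr_left ?_
    intro x'
    simp [hst]
  refine HasFDerivAt.differentiableAt
    (f' := -((e.symm : Vec m →L[ℝ] Vec m).comp B)) ?_
  rw [hasFDerivAt_iff_isLittleO]
  refine Asymptotics.IsBigO.trans_isLittleO (Asymptotics.IsBigO.of_bound (1 / μg)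
    (Filter.Eventually.of_forall fun x' => ?_)) ho2
  have h := hlow (ystar x' - ystar x + e.symm (B (x' - x)))
  rw [map_add, he] at h
  simp only [neg_apply, ContinuousLinearMap.comp_apply, sub_neg_eq_add,
    ContinuousLinearEquiv.coe_coe]
  rw [one_div, inv_mul_eq_div, le_div_iff₀ hμg, add_comm (B (x' - x))]
  linarith


/-- convergence rate of the prediction-correction dynamics:
`(1/(2t)) ∫₀ᵗ ‖∇ℓ(x(τ))‖² dτ ≤ (1/t)(ℓ(x(0)) − ℓ(x*) + (M₁²/(4βμ_g²))‖∇_y g(x(0),y(0))‖²)`. -/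
theorem stmt_17 {n m : ℕ} (f g : Vec n → Vec m → ℝ)
    -- Assumption A1
    (hf : ContDiff ℝ 1 (Function.uncurry f))
    (Cxf Cyf : ℝ) (hCxf : 0 < Cxf) (hCyf : 0 < Cyf)
    (hfxB : ∀ x y, ‖gradx f x y‖ ≤ Cxf)
    (hfyB : ∀ x y, ‖grady f x y‖ ≤ Cyf)
    (Lxf Lyf : ℝ≥0)
    (hfxL : LipschitzWith Lxf fun p : Vec n × Vec m => gradx f p.1 p.2)
    (hfyL : LipschitzWith Lyf fun p : Vec n × Vec m => grady f p.1 p.2)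
    -- Assumption A2
    (hg : ContDiff ℝ 2 (Function.uncurry g))
    (μg : ℝ) (hμg : 0 < μg)
    (hsc : ∀ x, StrongConvexOn Set.univ μg (g x))
    (Lyyg Lyxg : ℝ≥0)
    (hgyLy : ∀ x, LipschitzWith Lyyg fun y => grady g x y)
    (hgyLx : ∀ y, LipschitzWith Lyxg fun x => grady g x y)
    (Gyx : Vec n → Vec m → Vec n →L[ℝ] Vec m)
    (Gyy : Vec n → Vec m → Vec m →L[ℝ] Vec m)
    (hGyx : ∀ x y, HasFDerivAt (fun x' => grady g x' y) (Gyx x y) x)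
    (hGyy : ∀ x y, HasFDerivAt (fun y' => grady g x y') (Gyy x y) y)
    (Cyxg Cyyg : ℝ≥0)
    (hGyxL : LipschitzWith Cyxg fun p : Vec n × Vec m => Gyx p.1 p.2)
    (hGyyL : LipschitzWith Cyyg fun p : Vec n × Vec m => Gyy p.1 p.2)
    -- lower-level solution map, surrogate direction `v`, and the constant `M₁`
    (ystar : Vec n → Vec m)
    (hystar : ∀ x', IsMinOn (g x') Set.univ (ystar x'))
    (v : Vec n → Vec m → Vec m)
    (hv : ∀ x' y', Gyy x' y' (v x' y') = grady f x' y')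
    (M₁ : ℝ) (hM₁ : 0 < M₁)
    (hM₁P : ∀ x' y',
      ‖gradient (fun x'' => f x'' (ystar x'')) x' - Fsur f Gyx v x' y'‖ ≤ M₁ * ‖y' - ystar x'‖)
    -- the prediction-correction dynamics with parameter `β > 0`, on `t ≥ 0`:
    -- `ẋ = −F(x,y)`, `ẏ = −[∇²_{yy}g]⁻¹ (β ∇_y g + ∇²_{yx}g ẋ)`
    (β : ℝ) (hβ : 0 < β)
    (x : ℝ → Vec n) (y : ℝ → Vec m) (yd : ℝ → Vec m)
    (hx : ∀ t, 0 ≤ t → HasDerivAt x (-Fsur f Gyx v (x t) (y t)) t)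
    (hy : ∀ t, 0 ≤ t → HasDerivAt y (yd t) t)
    (hyd : ∀ t, 0 ≤ t →
      Gyy (x t) (y t) (yd t)
        = -(β • grady g (x t) (y t) + Gyx (x t) (y t) (-Fsur f Gyx v (x t) (y t))))
    -- `x*` is a global minimizer of the implicit objective `ℓ(x) = f(x, y*(x))`
    (xstar : Vec n)
    (hxstar : ∀ x' : Vec n, f xstar (ystar xstar) ≤ f x' (ystar x')) :
    ∀ t, 0 < t →
      (1 / (2 * t)) * ∫ τ in (0:ℝ)..t, ‖gradient (fun x' => f x' (ystar x')) (x τ)‖ ^ 2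
        ≤ (1 / t) * (f (x 0) (ystar (x 0)) - f xstar (ystar xstar)
            + (M₁ ^ 2 / (4 * β * μg ^ 2)) * ‖grady g (x 0) (y 0)‖ ^ 2) := by
  intro t ht
  have hst := aux_grady_star g ystar hystar
  set l : Vec n → ℝ := fun x' => f x' (ystar x') with hl
  have hld : Differentiable ℝ l := by
    intro x'
    have h1 := aux_ystar_diff g hg μg hμg hsc Lyxg hgyLx ystar hystar x' _ _
      (hGyx x' (ystar x')) (hGyy x' (ystar x'))
    have h2 : DifferentiableAt ℝ (Function.uncurry f) (x', ystar x') :=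
      hf.differentiable (by norm_num) _
    exact DifferentiableAt.comp (g := Function.uncurry f) (f := fun x' => (x', ystar x')) x' h2
      (differentiableAt_id.prodMk h1)
  set c : ℝ := M₁ ^ 2 / (4 * β * μg ^ 2) with hc
  have hc0 : 0 ≤ c := by positivity
  set G : ℝ → Vec m := fun s => grady g (x s) (y s) with hG
  have hGd : ∀ s, 0 ≤ s → HasDerivAt G (-(β • G s)) s := by
    intro s hs
    have h1 := aux_G_deriv g hg (x s) (y s) _ _ (hGyx _ _) (hGyy _ _)
    have h2 := HasFDerivAt.comp_hasDerivAt (f := fun s => (x s, y s)) s h1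
      ((hx s hs).prodMk (hy s hs))
    have h3 : ((Gyx (x s) (y s)).coprod (Gyy (x s) (y s)))
        (-Fsur f Gyx v (x s) (y s), yd s) = -(β • G s) := by
      rw [ContinuousLinearMap.coprod_apply]
      simp only
      rw [hyd s hs]
      simp only [hG]
      abel
    rw [h3] at h2
    exact h2
  set W : ℝ → ℝ := fun s => -l (x s) - c * ‖G s‖ ^ 2 with hW
  set W' : ℝ → ℝ := fun s => ⟪gradient l (x s), Fsur f Gyx v (x s) (y s)⟫
    + 2 * c * β * ‖G s‖ ^ 2 with hW'
  have hWd : ∀ s, 0 ≤ s → HasDerivAt W (W' s) s := by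
    intro s hs
    have h1 := (hld (x s)).hasFDerivAt.comp_hasDerivAt s (hx s hs)
    have h2 := (hGd s hs).norm_sq
    have h3 := h1.neg.sub (h2.const_mul c)
    refine h3.congr_deriv ?_
    simp only [hW', gradient, InnerProductSpace.toDual_symm_apply, map_neg, inner_neg_right,
      real_inner_smul_right, real_inner_self_eq_norm_sq]
    ring
  have hbound : ∀ s, 1 / 2 * ‖gradient l (x s)‖ ^ 2 ≤ W' s := by
    intro s
    have h1 := hM₁P (x s) (y s)
    have h2 := aux_lower g hg μg hsc (x s) (ystar (x s)) (y s)
    rw [hst, sub_zero] at h2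
    have h3 : ‖gradient l (x s) - Fsur f Gyx v (x s) (y s)‖ ≤ M₁ / μg * ‖G s‖ := by
      refine h1.trans ?_
      rw [div_mul_eq_mul_div, le_div_iff₀ hμg, mul_assoc, mul_comm _ μg]
      exact mul_le_mul_of_nonneg_left h2 hM₁.le
    have h4 := pow_le_pow_left₀ (norm_nonneg _) h3 2
    rw [norm_sub_sq_real] at h4
    have h5 : 2 * c * β * ‖G s‖ ^ 2 = 1 / 2 * (M₁ / μg * ‖G s‖) ^ 2 := by
      rw [hc]; field_simp; ring
    simp only [hW']
    rw [h5]
    nlinarith [sq_nonneg ‖Fsur f Gyx v (x s) (y s)‖]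
  have hx0 : 0 ≤ l (x 0) - f xstar (ystar xstar) + c * ‖G 0‖ ^ 2 := by
    have := hxstar (x 0)
    have h2 : 0 ≤ c * ‖G 0‖ ^ 2 := by positivity
    simp only [hl]
    linarith
  have key : 1 / 2 * ∫ τ in (0:ℝ)..t, ‖gradient l (x τ)‖ ^ 2
      ≤ l (x 0) - f xstar (ystar xstar) + c * ‖G 0‖ ^ 2 := by
    by_cases hint : IntervalIntegrable (fun τ => ‖gradient l (x τ)‖ ^ 2) volume 0 t
    · have h1 := intervalIntegral.integral_le_sub_of_hasDeriv_right_of_le (g := W) (g' := W')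
        (φ := fun τ => 1 / 2 * ‖gradient l (x τ)‖ ^ 2) ht.le
        (fun s hs => (hWd s hs.1).continuousAt.continuousWithinAt)
        (fun s hs => (hWd s hs.1.le).hasDerivWithinAt)
        ((intervalIntegrable_iff_integrableOn_Icc_of_le ht.le).1 (hint.const_mul _))
        (fun s _ => hbound s)
      rw [intervalIntegral.integral_const_mul] at h1
      refine h1.trans ?_
      have h2 := hxstar (x t)
      have h3 : 0 ≤ c * ‖G t‖ ^ 2 := by positivity
      simp only [hW, hl]
      linarith
    · rw [intervalIntegral.integral_undef hint]
      simpa using hx0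
  have h6 : (1 / (2 * t)) * ∫ τ in (0:ℝ)..t, ‖gradient l (x τ)‖ ^ 2
      = (1 / t) * (1 / 2 * ∫ τ in (0:ℝ)..t, ‖gradient l (x τ)‖ ^ 2) := by
    field_simp
  rw [h6]
  exact mul_le_mul_of_nonneg_left key (by positivity)


end
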